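/- Let S be a finite set and let X = (X_0, X_1, …, X_d) be an S-valued random vector with entropies satisfying: h(X) ≤ h(X_0, X_1, …, X_{d-1}) + b for some b ≥ 0, and suppose the 'star-edge' entropy inequality h(X) ≥ (d/2)·h(X_0, X_1) holds, where all pairs (X_0, X_i) have the same joint distribution (exchangeability of the leaves given the root). Then the total correlation of (X_0, X_1, …, X_{d-1}), defined as t = ∑_{i=0}^{d-1} h(X_i) - h(X_0,…,X_{d-1}), satisfies t ≤ b·(2d-2)/(d-2), assuming additionally that all X_i have the same marginal distribution and d ≥ 3. -/

import Mathlib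

open Finset
open scoped Classical

/-- Shannon entropy (natural logarithm) of a distribution on a finite type. -/
noncomputable def ent {β : Type} [Fintype β] (p : β → ℝ) : ℝ :=
  -∑ b, p b * Real.log (p b)

/-- Pushforward (distribution of the statistic `g`) of a distribution `μ`. -/
noncomputable def push {Ω β : Type} [Fintype Ω] (μ : Ω → ℝ) (g : Ω → β) : β → ℝ :=
  fun b => ∑ x ∈ Finset.univ.filter (fun x => g x = b), μ x

theorem push_nonneg {Ω β : Type} [Fintype Ω] {μ : Ω → ℝ} (hμ : ∀ x, 0 ≤ μ x) (g : Ω → β)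
    (b : β) : 0 ≤ push μ g b :=
  sum_nonneg fun x _ => hμ x

theorem le_push {Ω β : Type} [Fintype Ω] {μ : Ω → ℝ} (hμ : ∀ x, 0 ≤ μ x) (g : Ω → β)
    (x : Ω) : μ x ≤ push μ g (g x) :=
  single_le_sum (f := μ) (fun y _ => hμ y) (by simp)

/-- Change of variables for a pushforward. -/
theorem sum_push_mul {Ω β : Type} [Fintype Ω] [Fintype β] (μ : Ω → ℝ) (g : Ω → β) (f : β → ℝ) :
    ∑ b, push μ g b * f b = ∑ x, μ x * f (g x) := by
  rw [← sum_fiberwise (s := univ) (g := g)]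
  refine sum_congr rfl fun b _ => ?_
  rw [push, sum_mul]
  exact sum_congr rfl fun x hx => by rw [(mem_filter.mp hx).2]

theorem sum_push {Ω β : Type} [Fintype Ω] [Fintype β] (μ : Ω → ℝ) (g : Ω → β) :
    ∑ b, push μ g b = ∑ x, μ x := by
  simpa using sum_push_mul μ g fun _ => 1

theorem push_push {Ω β γ : Type} [Fintype Ω] [Fintype β] (μ : Ω → ℝ) (g : Ω → β) (k : β → γ) :
    push (push μ g) k = push μ fun x => k (g x) := by
  funext c
  simpa [push, sum_filter] using sum_push_mul μ g fun b => if k b = c then 1 else 0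

theorem sum_push_prodMk {Ω β γ : Type} [Fintype Ω] [Fintype γ] (μ : Ω → ℝ) (g : Ω → β)
    (k : Ω → γ) (b : β) : ∑ c, push μ (fun x => (g x, k x)) (b, c) = push μ g b := by
  rw [push, ← sum_fiberwise (g := k)]
  simp only [push, filter_filter, Prod.mk.injEq]

theorem ent_push {Ω β : Type} [Fintype Ω] [Fintype β] (μ : Ω → ℝ) (g : Ω → β) :
    ent (push μ g) = -∑ x, μ x * Real.log (push μ g (g x)) := by
  rw [ent, sum_push_mul μ g fun b => Real.log (push μ g b)]

/-- Gibbs' inequality. -/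
theorem ent_le_cross_ent {Ω : Type} [Fintype Ω] {p q : Ω → ℝ} (hp : ∀ x, 0 ≤ p x)
    (hq : ∀ x, 0 ≤ q x) (hpq : ∀ x, 0 < p x → 0 < q x) (hsum : ∑ x, q x ≤ ∑ x, p x) :
    ent p ≤ -∑ x, p x * Real.log (q x) := by
  have key : ∀ x, p x * Real.log (q x) - p x * Real.log (p x) ≤ q x - p x := by
    intro x
    rcases (hp x).eq_or_lt with h | h
    · simpa [← h] using hq x
    · have hlog := Real.log_le_sub_one_of_pos (div_pos (hpq x h) h)
      rw [Real.log_div (hpq x h).ne' h.ne'] at hlog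
      have := mul_le_mul_of_nonneg_left hlog h.le
      rw [mul_sub, mul_sub, mul_div_cancel₀ _ h.ne', mul_one] at this
      exact this
  have := sum_le_sum fun x (_ : x ∈ univ) => key x
  rw [sum_sub_distrib, sum_sub_distrib] at this
  rw [ent]
  linarith

/-- The entropy of a random vector is at most that of the star-shaped tree model with the same
root-leaf marginals. -/
theorem ent_le_star {S : Type} [Fintype S] {n : ℕ} {ν : (Fin (n + 1) → S) → ℝ}
    (hν : ∀ y, 0 ≤ ν y) :
    ent ν ≤ ∑ i : Fin n, ent (push ν fun y => (y 0, y i.succ))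
      - ((n : ℝ) - 1) * ent (push ν fun y => y 0) := by
  set r := push ν fun y => y 0 with hr
  set p : Fin n → S × S → ℝ := fun i => push ν fun y => (y 0, y i.succ) with hp
  have hr0 : ∀ a, 0 ≤ r a := push_nonneg hν _
  have hp0 : ∀ i c, 0 ≤ p i c := fun i => push_nonneg hν _
  have hrpos : ∀ y, 0 < ν y → 0 < r (y 0) := fun y hy =>
    hy.trans_le (le_push hν (fun y => y 0) y)
  have hppos : ∀ i y, 0 < ν y → 0 < p i (y 0, y i.succ) := fun i y hy =>
    hy.trans_le (le_push hν (fun y => (y 0, y i.succ)) y)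
  let q : (Fin (n + 1) → S) → ℝ := fun y => r (y 0) * ∏ i, (p i (y 0, y i.succ) / r (y 0))
  have hqsum : ∑ y, q y ≤ ∑ y, ν y := by
    have hsplit : ∑ y, q y = ∑ a, r a * ∏ i, ∑ c, p i (a, c) / r a := by
      rw [← (Fin.consEquiv fun _ => S).sum_comp, Fintype.sum_prod_type]
      refine sum_congr rfl fun a _ => ?_
      rw [Fintype.prod_sum, mul_sum]
      simp [q, Fin.consEquiv]
    rw [hsplit, ← sum_push ν fun y => y 0]
    refine sum_le_sum fun a _ => ?_
    rcases (hr0 a).eq_or_lt with h | h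
    · simp [← hr, ← h]
    · have hcond : ∀ i, ∑ c, p i (a, c) / r a = 1 := fun i => by
        rw [← sum_div, hp, sum_push_prodMk ν (fun y => y 0) (fun y => y i.succ) a]
        exact div_self h.ne'
      simp [hcond, ← hr]
  have hlog : ∀ y, ν y * Real.log (q y) = ∑ i, ν y * Real.log (p i (y 0, y i.succ))
      - ((n : ℝ) - 1) * (ν y * Real.log (r (y 0))) := by
    intro y
    rcases (hν y).eq_or_lt with h | h
    · simp [← h]
    · have hry := (hrpos y h).ne'
      have hterm : ∀ i, p i (y 0, y i.succ) / r (y 0) ≠ 0 := fun i =>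
        div_ne_zero (hppos i y h).ne' hry
      rw [Real.log_mul hry (prod_ne_zero_iff.mpr fun i _ => hterm i),
        Real.log_prod fun i _ => hterm i,
        sum_congr rfl fun i _ => Real.log_div (hppos i y h).ne' hry, ← mul_sum]
      simp only [sum_sub_distrib, sum_const, card_univ, Fintype.card_fin, nsmul_eq_mul]
      ring
  have hgibbs := ent_le_cross_ent hν
    (fun y => mul_nonneg (hr0 _) (prod_nonneg fun i _ => div_nonneg (hp0 i _) (hr0 _)))
    (fun y hy => mul_pos (hrpos y hy)
      (prod_pos fun i _ => div_pos (hppos i y hy) (hrpos y hy))) hqsum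
  refine hgibbs.trans_eq ?_
  rw [sum_congr rfl fun y _ => hlog y, sum_sub_distrib, ← mul_sum, sum_comm]
  simp only [hr, hp, ent_push, sum_neg_distrib]
  ring

/- **Statement 3**: for an `S`-valued random vector `X = (X_0, …, X_d)` with leaves
exchangeable over the root and identically distributed coordinates, if
`h(X) ≤ h(X_0,…,X_{d-1}) + b` and the star-edge inequality `h(X) ≥ (d/2)·h(X_0,X_1)`
holds, then the total correlation of `(X_0,…,X_{d-1})` is at most `b·(2d-2)/(d-2)`. -/
theorem total_correlation_bound {S : Type} [Fintype S] (d : ℕ) (hd : 3 ≤ d)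
    (μ : (Fin (d + 1) → S) → ℝ) (hμ0 : ∀ x, 0 ≤ μ x) (hμ1 : ∑ x, μ x = 1)
    (b : ℝ) (hb : 0 ≤ b)
    (hexch : ∀ i : Fin d, push μ (fun x => (x 0, x i.succ)) = push μ (fun x => (x 0, x 1)))
    (hmarg : ∀ i : Fin (d + 1), push μ (fun x => x i) = push μ (fun x => x 0))
    (hjoint : ent μ ≤ ent (push μ (fun x => fun i : Fin d => x i.castSucc)) + b)
    (hstar : ent μ ≥ ((d : ℝ) / 2) * ent (push μ (fun x => (x 0, x 1)))) :
    (∑ i : Fin d, ent (push μ (fun x => x i.castSucc)))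
        - ent (push μ (fun x => fun i : Fin d => x i.castSucc))
      ≤ b * (2 * (d : ℝ) - 2) / ((d : ℝ) - 2) := by
  obtain ⟨n, rfl⟩ : ∃ n, d = n + 1 := ⟨d - 1, by omega⟩
  have htree := ent_le_star (push_nonneg hμ0 fun x => fun i : Fin (n + 1) => x i.castSucc)
  have hedge : ∀ i : Fin n, push (push μ fun x => fun i : Fin (n + 1) => x i.castSucc)
      (fun y => (y 0, y i.succ)) = push μ fun x => (x 0, x 1) := fun i => by
    rw [push_push, ← hexch i.castSucc]
    rfl
  have hroot : push (push μ fun x => fun i : Fin (n + 1) => x i.castSucc) (fun y => y 0)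
      = push μ fun x => x 0 := by
    rw [push_push]
    rfl
  simp only [hedge, hroot, sum_const, card_univ, Fintype.card_fin, nsmul_eq_mul] at htree
  simp only [hmarg, sum_const, card_univ, Fintype.card_fin, nsmul_eq_mul]
  have hn : (2 : ℝ) ≤ n := by exact_mod_cast (by omega : 2 ≤ n)
  push_cast at hstar ⊢
  rw [le_div_iff₀ (by linarith)]
  nlinarith [mul_le_mul_of_nonneg_left (hstar.le.trans hjoint) (by linarith : (0 : ℝ) ≤ 2 * n),
    mul_le_mul_of_nonneg_left htree (by linarith : (0 : ℝ) ≤ n + 1)]
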